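/- Let k be a field, n a natural number, and A = k[x₁, …, xₙ] the polynomial ring over k. Let M be a finitely generated A-module that is annihilated by some power of the ideal (x₁, …, xₙ) generated by the variables. Then Ext_A^i(M, A) = 0 for all i ≠ n, and Ext_A^n(M, A) is isomorphic, as an A-module, to the k-linear dual Hom_k(M, k), where A acts on Hom_k(M, k) by (a·f)(m) = f(a·m). -/

import Mathlib

/-!
Write `A = k[x₁, …, xₙ]`, suppose `(x₁, …, xₙ)^t` kills `M`, and put
`q = (x₁^(t+1), …, xₙ^(t+1))`. The generators of `q` form a weakly regular sequence of length `n`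
on `A` (`isWeaklyRegular_X_pow`) and kill `M`. The long exact sequences of
`0 → Y → Y → Y/xY → 0`, in which multiplication by `x` on `Ext(M, Y)` is zero, therefore give
`Ext^i(M, A) = 0` for `i < n` (`subsingleton_ext_of_isWeaklyRegular`) and
`Ext^n(M, A) ≃ Hom_A(M, A/q)` (`nonempty_ext_equiv_of_isWeaklyRegular`).

The coefficient of `(x₁⋯xₙ)^t` is a functional on `A/q` for which the pairing `(b, z) ↦ res (b z)`
is perfect, so composing with it identifies `Hom_A(M, A/q)` with `Hom_k(M, k)`
(`residueHom_bijective`).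

For `i > n`, `M` is an iterated extension of copies of `A/(x₁, …, xₙ)`, which has projective
dimension at most `n` since the variables form a regular sequence
(`hasProjectiveDimensionLT_of_torsion`).

The long exact sequences are those of `Abelian.Ext`; `nonempty_ext_equiv_abelianExt` transports the
results to the derived functor `Ext R (ModuleCat R) n`.
-/

open CategoryTheory

/-- `extA A i M N` is the `A`-module `Ext_A^i(M, N)`, computed in the abelian category of
`A`-modules via the derived functor `Ext` bifunctor. -/
noncomputable abbrev extA (A : Type) [CommRing A] (i : ℕ) (M N : Type)
    [AddCommGroup M] [Module A M] [AddCommGroup N] [Module A N] : ModuleCat A :=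
  ((Ext A (ModuleCat A) i).obj (Opposite.op (ModuleCat.of A M))).obj (ModuleCat.of A N)

/-- For a commutative ring `A`, a subring of scalars `k`, and an `A`-module `M`, the
`k`-linear dual `Hom_k(M, k)` is an `A`-module through the `A`-action on `M`:
`(a • f) m = f (a • m)`. -/
noncomputable instance dualModule (k A M : Type) [CommRing k] [CommRing A] [Algebra k A]
    [AddCommGroup M] [Module A M] [Module k M] [IsScalarTower k A M] :
    Module A (M →ₗ[k] k) where
  smul a f := f.comp ((LinearMap.lsmul A M a).restrictScalars k)
  one_smul f := by ext m; show f ((1 : A) • m) = f m; rw [one_smul]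
  mul_smul a b f := by
    ext m
    show f ((a * b) • m) = f (b • a • m)
    rw [mul_comm, mul_smul]
  smul_zero a := by ext m; rfl
  smul_add a f g := by ext m; rfl
  add_smul a b f := by
    ext m
    show f ((a + b) • m) = f (a • m) + f (b • m)
    rw [add_smul, map_add]
  zero_smul f := by ext m; show f ((0 : A) • m) = 0; rw [zero_smul, map_zero]

/-! ### Dimension shifting along a weakly regular sequence -/

section DimensionShift

variable {R : Type} [CommRing R]

/-- Multiplication by `x` on the second argument of `Ext` agrees with multiplication by `x` on
the first one, so it vanishes as soon as `x` kills `N`. -/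
lemma ext_comp_smul_eq_zero {N Y : ModuleCat.{0} R} {x : R} (hx : ∀ m : N, x • m = 0)
    {i : ℕ} (α : Abelian.Ext N Y i) :
    α.comp (Abelian.Ext.mk₀ (x • 𝟙 Y)) (add_zero i) = 0 := by
  have h0 : x • 𝟙 N = 0 := by
    ext m
    exact hx m
  rw [← Abelian.Ext.smul_eq_comp_mk₀]
  calc x • α = x • ((Abelian.Ext.mk₀ (𝟙 N)).comp α (zero_add i)) := by
        rw [Abelian.Ext.mk₀_id_comp]
    _ = (Abelian.Ext.mk₀ (x • 𝟙 N)).comp α (zero_add i) := by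
        rw [Abelian.Ext.mk₀_smul, Abelian.Ext.smul_comp]
    _ = 0 := by rw [h0, Abelian.Ext.mk₀_zero, Abelian.Ext.zero_comp]

/-- The connecting homomorphism `Ext^i(N, Y/xY) → Ext^{i+1}(N, Y)` of
`0 → Y → Y → Y/xY → 0` is surjective when `x` kills `N`. -/
lemma extClass_postcomp_surjective {N Y : ModuleCat.{0} R} {x : R} (hx : ∀ m : N, x • m = 0)
    (hreg : IsSMulRegular Y x) {i : ℕ} (α : Abelian.Ext N Y (i + 1)) :
    ∃ β : Abelian.Ext N (ModuleCat.of R (QuotSMulTop x Y)) i,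
      β.comp hreg.smulShortComplex_shortExact.extClass rfl = α :=
  Abelian.Ext.covariant_sequence_exact₁ N hreg.smulShortComplex_shortExact α
    (ext_comp_smul_eq_zero hx α) rfl

lemma subsingleton_ext_of_isWeaklyRegular {N : ModuleCat.{0} R} {rs : List R}
    (hN : ∀ r ∈ rs, ∀ m : N, r • m = 0) (Y : Type) [AddCommGroup Y] [Module R Y]
    (hrs : RingTheory.Sequence.IsWeaklyRegular Y rs) {i : ℕ} (hi : i < rs.length) :
    Subsingleton (Abelian.Ext N (ModuleCat.of R Y) i) := by
  induction rs generalizing Y i with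
  | nil => simp at hi
  | cons x rs ih =>
    rw [RingTheory.Sequence.isWeaklyRegular_cons_iff] at hrs
    have hx := hN x (by simp)
    cases i with
    | zero =>
      have : Subsingleton (N →ₗ[R] Y) := by
        refine ⟨fun f g ↦ LinearMap.ext fun m ↦ hrs.1 ?_⟩
        change x • f m = x • g m
        rw [← map_smul, ← map_smul, hx, map_zero, map_zero]
      exact (Abelian.Ext.addEquiv₀.trans ModuleCat.homAddEquiv).subsingleton
    | succ i =>
      have := ih (fun r hr ↦ hN r (by simp [hr])) (QuotSMulTop x Y) hrs.2 (by simpa using hi)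
      refine subsingleton_of_forall_eq 0 fun α ↦ ?_
      obtain ⟨β, rfl⟩ := extClass_postcomp_surjective (Y := ModuleCat.of R Y) hx hrs.1 α
      rw [show β = 0 from this.elim _ _]
      exact Abelian.Ext.zero_comp ..

/-- Rees' theorem: if `N` is killed by a weakly `Y`-regular sequence `rs` of length `r`, then
`Ext^r(N, Y) ≃ Hom(N, Y/(rs)Y)`, by composing `r` connecting isomorphisms. -/
lemma nonempty_ext_equiv_of_isWeaklyRegular {N : ModuleCat.{0} R} {rs : List R}
    (hN : ∀ r ∈ rs, ∀ m : N, r • m = 0) (Y : Type) [AddCommGroup Y] [Module R Y]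
    (hrs : RingTheory.Sequence.IsWeaklyRegular Y rs) :
    Nonempty (Abelian.Ext N (ModuleCat.of R Y) rs.length ≃ₗ[R]
      (N →ₗ[R] (Y ⧸ (Ideal.ofList rs • ⊤ : Submodule R Y)))) := by
  induction rs generalizing Y with
  | nil =>
    have e : (Y ⧸ (Ideal.ofList ([] : List R) • ⊤ : Submodule R Y)) ≃ₗ[R] Y :=
      Submodule.quotEquivOfEqBot _ (by simp)
    exact ⟨Abelian.Ext.linearEquiv₀ (R := R) ≪≫ₗ ModuleCat.homLinearEquiv (S := R) ≪≫ₗ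
      LinearEquiv.congrRight e.symm⟩
  | cons x rs ih =>
    have hrs' := hrs
    rw [RingTheory.Sequence.isWeaklyRegular_cons_iff] at hrs
    have hx := hN x (by simp)
    obtain ⟨e⟩ := ih (fun r hr ↦ hN r (by simp [hr])) (QuotSMulTop x Y) hrs.2
    have hS := IsSMulRegular.smulShortComplex_shortExact (M := ModuleCat.of R Y) hrs.1
    let δ : Abelian.Ext N (ModuleCat.of R (QuotSMulTop x Y)) rs.length →ₗ[R]
        Abelian.Ext N (ModuleCat.of R Y) (rs.length + 1) :=
      hS.extClass.postcompOfLinear R N rfl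
    have hsub : Subsingleton (Abelian.Ext N (ModuleCat.of R Y) rs.length) :=
      subsingleton_ext_of_isWeaklyRegular hN Y hrs' (by simp)
    have hδ : Function.Bijective δ := by
      constructor
      · rw [injective_iff_map_eq_zero]
        intro β hβ
        obtain ⟨γ, rfl⟩ := Abelian.Ext.covariant_sequence_exact₃ N hS β rfl hβ
        rw [show γ = 0 from hsub.elim _ _, Abelian.Ext.zero_comp]
        rfl
      · exact fun α ↦ extClass_postcomp_surjective (Y := ModuleCat.of R Y) hx hrs.1 α
    exact ⟨(LinearEquiv.ofBijective δ hδ).symm ≪≫ₗ e ≪≫ₗ LinearEquiv.congrRight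
      (Submodule.quotOfListConsSMulTopEquivQuotSMulTopInner Y x rs).symm⟩

/-- Passing to the quotient by a weakly regular sequence raises the projective dimension by at
most the length of the sequence. -/
lemma hasProjectiveDimensionLT_quotient {rs : List R} (Y : Type) [AddCommGroup Y] [Module R Y]
    (hrs : RingTheory.Sequence.IsWeaklyRegular Y rs) {d : ℕ}
    (hY : HasProjectiveDimensionLT (ModuleCat.of R Y) (d + 1)) :
    HasProjectiveDimensionLT
      (ModuleCat.of R (Y ⧸ (Ideal.ofList rs • ⊤ : Submodule R Y))) (d + rs.length + 1) := by
  induction rs generalizing Y d with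
  | nil =>
    have e : (Y ⧸ (Ideal.ofList ([] : List R) • ⊤ : Submodule R Y)) ≃ₗ[R] Y :=
      Submodule.quotEquivOfEqBot _ (by simp)
    exact hasProjectiveDimensionLT_of_iso e.symm.toModuleIso _
  | cons x rs ih =>
    rw [RingTheory.Sequence.isWeaklyRegular_cons_iff] at hrs
    have hS := IsSMulRegular.smulShortComplex_shortExact (M := ModuleCat.of R Y) hrs.1
    have h1 : HasProjectiveDimensionLT (ModuleCat.of R (QuotSMulTop x Y)) (d + 1 + 1) :=
      hS.hasProjectiveDimensionLT_X₃ (d + 1) hY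
        (hasProjectiveDimensionLT_of_ge (ModuleCat.of R Y) (d + 1) _ (by omega))
    have h2 := ih (QuotSMulTop x Y) hrs.2 h1
    have h3 := hasProjectiveDimensionLT_of_iso
      (Submodule.quotOfListConsSMulTopEquivQuotSMulTopInner Y x rs).symm.toModuleIso
      (d + 1 + rs.length + 1)
    rwa [show d + (x :: rs).length + 1 = d + 1 + rs.length + 1 by simp; omega]

end DimensionShift

/-! ### Comparison of the two constructions of `Ext` -/

section Bridge

variable {R : Type} [CommRing R]

/-- In degree `0` there are no coboundaries: a `0`-cocycle of vanishing class is zero. -/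
lemma extMk_zero_eq_zero {X Y : ModuleCat.{0} R} (P : ProjectiveResolution X)
    (f : P.complex.X 0 ⟶ Y) (hf : P.complex.d 1 0 ≫ f = 0)
    (h : P.extMk f 1 rfl hf = 0) : f = 0 := by
  rw [← P.extEquivCohomologyClass.apply_eq_iff_eq, P.extEquivCohomologyClass_extMk,
    P.extEquivCohomologyClass_zero, CochainComplex.HomComplex.CohomologyClass.mk_eq_zero_iff,
    CochainComplex.HomComplex.Cocycle.toSingleMk_mem_coboundaries_iff _ _ _ _ _ 1 (by simp)] at h
  obtain ⟨g, hg⟩ := h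
  rw [(CochainComplex.isZero_of_isStrictlyLE P.cochainComplex 0 1 (by simp)).eq_of_src g 0,
    Limits.comp_zero] at hg
  rw [← cancel_epi (P.cochainComplexXIso (-(0 : ℕ)) 0 rfl).hom, Limits.comp_zero]
  exact hg.symm

/-- The derived functor `Ext R (ModuleCat R) n` agrees, `R`-linearly, with the `Ext` groups
defined as morphisms in the derived category. Both are the degree `n` cohomology of `Hom(P, Y)`
for a projective resolution `P` of `X`: cocycles `f : P_n ⟶ Y` surject onto `Abelian.Ext X Y n`
by `ProjectiveResolution.extMk`, with kernel the coboundaries. -/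
theorem nonempty_ext_equiv_abelianExt (X Y : ModuleCat.{0} R) (n : ℕ) :
    Nonempty (((Ext R (ModuleCat R) n).obj (Opposite.op X)).obj Y ≃ₗ[R] Abelian.Ext X Y n) := by
  let P := ProjectiveResolution.of X
  let K := P.complex.linearYonedaObj R Y
  let e₁ := (P.isoExt (R := R) n Y).toLinearEquiv
  let S := K.sc n
  let e₂ := S.moduleCatHomologyIso.toLinearEquiv
  have hcyc : ∀ f : P.complex.X n ⟶ Y,
      (show S.X₂ from f) ∈ LinearMap.ker S.g.hom ↔ P.complex.d (n + 1) n ≫ f = 0 := by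
    intro f
    change (K.d n ((ComplexShape.up ℕ).next n)).hom f = 0 ↔ _
    rw [CochainComplex.next]
    rfl
  let φ : LinearMap.ker S.g.hom →ₗ[R] Abelian.Ext X Y n :=
    { toFun f := P.extMk (show P.complex.X n ⟶ Y from f.1) (n + 1) rfl ((hcyc _).1 f.2)
      map_add' f g := (P.add_extMk _ _ (n + 1) rfl ((hcyc _).1 f.2) ((hcyc _).1 g.2)).symm
      map_smul' r f := by
        dsimp only [RingHom.id_apply]
        rw [Abelian.Ext.smul_eq_comp_mk₀]
        refine Eq.trans ?_ (P.extMk_comp_mk₀ _ (n + 1) rfl ((hcyc _).1 f.2) _).symm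
        congr 1 }
  have hsurj : Function.Surjective φ := by
    intro α
    obtain ⟨f, hf, rfl⟩ := P.extMk_surjective α (n + 1) rfl
    exact ⟨⟨f, (hcyc f).2 hf⟩, rfl⟩
  have hker : LinearMap.ker φ = LinearMap.range S.moduleCatToCycles := by
    ext ⟨f, hf⟩
    rw [LinearMap.mem_ker, LinearMap.mem_range]
    have hmem : (∃ g, S.moduleCatToCycles g = ⟨f, hf⟩) ↔
        ∃ g, (K.d ((ComplexShape.up ℕ).prev n) n).hom g = f :=
      exists_congr fun g ↦ Subtype.ext_iff
    rw [hmem]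
    cases n with
    | zero =>
      rw [K.shape _ _ (by simp)]
      constructor
      · intro h
        exact ⟨0, (extMk_zero_eq_zero P f ((hcyc f).1 hf) h).symm⟩
      · rintro ⟨g, rfl⟩
        exact P.extMk_zero 1 rfl
    | succ p =>
      rw [CochainComplex.prev_nat_succ]
      exact P.extMk_eq_zero_iff f (p + 2) rfl ((hcyc _).1 hf) p rfl
  exact ⟨e₁ ≪≫ₗ e₂ ≪≫ₗ Submodule.quotEquivOfEq _ _ hker.symm ≪≫ₗ
    φ.quotKerEquivOfSurjective hsurj⟩

end Bridge

/-! ### The ideal generated by powers of the variables -/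

section Monomial

variable {k : Type} [Field k] {n : ℕ}

open MvPolynomial

/-- The ideal generated by `X i ^ t`, `i ∈ L`, consists of the polynomials all of whose monomials
are divisible by one of these powers. -/
lemma mem_ofList_X_pow_smul_top_iff (t : ℕ) (L : List (Fin n)) (y : MvPolynomial (Fin n) k) :
    y ∈ (Ideal.ofList (L.map fun i ↦ (X i : MvPolynomial (Fin n) k) ^ t) • ⊤ :
      Submodule (MvPolynomial (Fin n) k) (MvPolynomial (Fin n) k)) ↔
    ∀ s ∈ y.support, ∃ i ∈ L, t ≤ s i := by
  have h := mem_ideal_span_monomial_image (x := y) (s := (fun i ↦ Finsupp.single i t) '' {i | i ∈ L})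
  rw [Set.image_image] at h
  have h2 : Ideal.ofList (L.map fun i ↦ (X i : MvPolynomial (Fin n) k) ^ t) =
      Ideal.span ((fun i ↦ monomial (Finsupp.single i t) (1 : k)) '' {i | i ∈ L}) := by
    rw [Ideal.ofList]
    congr 1
    ext z
    simp [X_pow_eq_monomial]
  rw [smul_eq_mul, Ideal.mul_top, h2, h]
  simp

lemma isWeaklyRegular_X_pow (t : ℕ) :
    RingTheory.Sequence.IsWeaklyRegular (MvPolynomial (Fin n) k)
      ((List.finRange n).map fun i ↦ (X i : MvPolynomial (Fin n) k) ^ t) := by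
  refine ⟨fun j hj ↦ ?_⟩
  have hjn : j < n := by simpa using hj
  rw [isSMulRegular_quotient_iff_mem_of_smul_mem]
  intro y hy
  rw [← List.map_take, mem_ofList_X_pow_smul_top_iff] at hy ⊢
  intro s hs
  replace hy : ∀ s ∈ ((X ⟨j, hjn⟩ : MvPolynomial (Fin n) k) ^ t * y).support,
      ∃ i ∈ (List.finRange n).take j, t ≤ s i := by
    simpa using hy
  obtain ⟨i, hi, hti⟩ := hy (Finsupp.single ⟨j, hjn⟩ t + s) (by
    rw [X_pow_eq_monomial, mem_support_iff, coeff_monomial_mul, one_mul]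
    exact mem_support_iff.1 hs)
  refine ⟨i, hi, ?_⟩
  -- `i` lies among the first `j` indices, so multiplying by `X j ^ t` leaves its exponent alone.
  have hij : (⟨j, hjn⟩ : Fin n) ≠ i := by
    rintro rfl
    obtain ⟨l, hl, hl'⟩ := List.mem_take_iff_getElem.1 hi
    simp at hl' hl
    omega
  simpa [Finsupp.single_eq_of_ne' hij] using hti

end Monomial

/-! ### The residue functional and duality -/

section Residue

variable {k : Type} [Field k] {n : ℕ}

open MvPolynomial

/-- The exponent `(t, …, t)` of the monomial spanning the socle of
`k[x₁, …, xₙ] / (x₁^(t+1), …, xₙ^(t+1))`. -/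
noncomputable def socleDegree (n t : ℕ) : Fin n →₀ ℕ := Finsupp.equivFunOnFinite.symm fun _ ↦ t

lemma socleDegree_apply (t : ℕ) (i : Fin n) : socleDegree n t i = t := rfl

variable {t : ℕ} {q : Submodule (MvPolynomial (Fin n) k) (MvPolynomial (Fin n) k)}
  (hq : ∀ y, y ∈ q ↔ ∀ s ∈ y.support, ∃ i, t + 1 ≤ s i)

/-- The residue functional on `k[x₁, …, xₙ] / (x₁^(t+1), …, xₙ^(t+1))`: the coefficient of the
socle monomial `(x₁⋯xₙ)^t`. The ideal is an arbitrary `q` satisfying the membership criterion `hq`,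
which determines it. -/
noncomputable def residue : (MvPolynomial (Fin n) k ⧸ q) →ₗ[k] k :=
  ((q.restrictScalars k).liftQ (lcoeff k (socleDegree n t)) (by
    intro y hy
    rw [LinearMap.mem_ker, lcoeff_apply]
    by_contra h
    obtain ⟨i, hi⟩ := (hq y).1 hy _ (mem_support_iff.2 h)
    rw [socleDegree_apply] at hi
    omega)) ∘ₗ (Submodule.Quotient.restrictScalarsEquiv k q).symm.toLinearMap

lemma residue_mk (y : MvPolynomial (Fin n) k) :
    residue hq (Submodule.Quotient.mk y) = coeff (socleDegree n t) y := rfl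

/-- The pairing `(b, z) ↦ residue (b • z)` is nondegenerate: a monomial `s` below the socle
degree is detected by multiplying with the complementary monomial. -/
lemma eq_zero_of_residue_smul (z : MvPolynomial (Fin n) k ⧸ q)
    (hz : ∀ b : MvPolynomial (Fin n) k, residue hq (b • z) = 0) : z = 0 := by
  obtain ⟨y, rfl⟩ := Submodule.Quotient.mk_surjective _ z
  rw [Submodule.Quotient.mk_eq_zero, hq]
  intro s hs
  by_contra! hlt
  have hle : s ≤ socleDegree n t := fun i ↦ by
    rw [socleDegree_apply]
    exact Nat.lt_succ_iff.1 (hlt i)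
  have h := hz (monomial (socleDegree n t - s) 1)
  rw [← Submodule.Quotient.mk_smul, residue_mk, smul_eq_mul] at h
  nth_rw 1 [← tsub_add_cancel_of_le hle] at h
  rw [coeff_monomial_mul, one_mul] at h
  exact mem_support_iff.1 hs h

variable {M : Type} [AddCommGroup M] [Module (MvPolynomial (Fin n) k) M]
    [Module k M] [IsScalarTower k (MvPolynomial (Fin n) k) M]

/-- Composition with the residue, `Hom_A(M, A/q) → Hom_k(M, k)`, as an `A`-linear map. -/
noncomputable def residueHom :
    (M →ₗ[MvPolynomial (Fin n) k] (MvPolynomial (Fin n) k ⧸ q))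
      →ₗ[MvPolynomial (Fin n) k] (M →ₗ[k] k) where
  toFun f := residue hq ∘ₗ f.restrictScalars k
  map_add' f g := by ext m; simp
  map_smul' a f := by
    ext m
    change residue hq (a • f m) = residue hq (f (a • m))
    rw [f.map_smul]

lemma residueHom_apply (f : M →ₗ[MvPolynomial (Fin n) k] (MvPolynomial (Fin n) k ⧸ q)) (m : M) :
    residueHom hq f m = residue hq (f m) := rfl

/-- If `M` is killed by the `X i ^ (t + 1)`, then for `g : M → k` and `m : M` the functional
`b ↦ g (b • m)` is represented by an element of `A/q`: the one whose coefficient at `s` is the value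
of the functional at the complementary monomial. -/
lemma exists_residue_smul_eq (hM : ∀ (i : Fin n) (m : M),
      (X i : MvPolynomial (Fin n) k) ^ (t + 1) • m = 0) (g : M →ₗ[k] k) (m : M) :
    ∃ z : MvPolynomial (Fin n) k ⧸ q,
      ∀ b : MvPolynomial (Fin n) k, residue hq (b • z) = g (b • m) := by
  refine ⟨Submodule.Quotient.mk (∑ s ∈ Finset.Icc 0 (socleDegree n t),
    monomial s (g (monomial (socleDegree n t - s) (1 : k) • m))), fun b ↦ ?_⟩
  rw [← Submodule.Quotient.mk_smul, residue_mk, smul_eq_mul]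
  induction b using MvPolynomial.induction_on' with
  | add b c hb hc => rw [add_mul, coeff_add, hb, hc, add_smul, map_add]
  | monomial u a =>
    rw [coeff_monomial_mul']
    have hsmul : ∀ c : k, monomial u c • m = c • (monomial u (1 : k) • m) := fun c ↦ by
      rw [← smul_assoc, smul_monomial, smul_eq_mul, mul_one]
    split_ifs with hu
    · rw [coeff_sum]
      simp only [coeff_monomial]
      rw [Finset.sum_ite_eq' , if_pos (Finset.mem_Icc.2 ⟨zero_le, tsub_le_self⟩),
        tsub_tsub_cancel_of_le hu, hsmul a, map_smul g a, smul_eq_mul]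
    · obtain ⟨i, hi⟩ : ∃ i, t + 1 ≤ u i := by
        by_contra! h
        exact hu fun i ↦ Nat.lt_succ_iff.1 (h i)
      have hle : Finsupp.single i (t + 1) ≤ u := Finsupp.single_le_iff.2 hi
      have h0 : monomial u a • m = 0 := by
        rw [← tsub_add_cancel_of_le hle, ← mul_one a, ← monomial_mul, ← X_pow_eq_monomial,
          mul_smul, hM, smul_zero]
      rw [h0, map_zero]

/-- Composition with the residue identifies `Hom_A(M, A/q)` with `Hom_k(M, k)`: the `A`-linear
lift of `g : M → k` sends `m` to the element representing `b ↦ g (b • m)`, which is unique by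
nondegeneracy. -/
lemma residueHom_bijective (hM : ∀ (i : Fin n) (m : M),
      (X i : MvPolynomial (Fin n) k) ^ (t + 1) • m = 0) :
    Function.Bijective (residueHom (M := M) hq) := by
  have huniq : ∀ z z' : MvPolynomial (Fin n) k ⧸ q,
      (∀ b : MvPolynomial (Fin n) k, residue hq (b • z) = residue hq (b • z')) → z = z' := by
    intro z z' h
    refine sub_eq_zero.1 (eq_zero_of_residue_smul hq _ fun b ↦ ?_)
    rw [smul_sub, map_sub, h b, sub_self]
  constructor
  · intro f f' h
    ext m
    refine huniq _ _ fun b ↦ ?_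
    rw [← map_smul, ← map_smul, ← residueHom_apply, ← residueHom_apply, h]
  · intro g
    choose F hF using exists_residue_smul_eq hq hM g
    refine ⟨{ toFun := F, map_add' := fun m m' ↦ ?_, map_smul' := fun a m ↦ ?_ }, ?_⟩
    · refine huniq _ _ fun b ↦ ?_
      rw [smul_add, map_add, hF, hF, hF, smul_add, map_add]
    · refine huniq _ _ fun b ↦ ?_
      rw [RingHom.id_apply, smul_smul, hF, hF, smul_smul]
    · ext m
      rw [residueHom_apply]
      simpa using hF m 1

end Residue

/-! ### Projective dimension of torsion modules -/

section ProjectiveDimension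

variable {k : Type} [Field k] {n : ℕ}

open MvPolynomial

/-- A prime ideal containing all variables is the ideal they generate, because it contains no
nonzero constant. -/
lemma prime_eq_ofList_X (p : Ideal (MvPolynomial (Fin n) k)) [hp : p.IsPrime]
    (hXp : ∀ i, X i ∈ p) :
    (Ideal.ofList ((List.finRange n).map fun i ↦ (X i : MvPolynomial (Fin n) k) ^ 1) • ⊤ :
      Submodule (MvPolynomial (Fin n) k) (MvPolynomial (Fin n) k)) = p := by
  have hle : (Ideal.ofList ((List.finRange n).map fun i ↦ (X i : MvPolynomial (Fin n) k) ^ 1) • ⊤ :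
      Submodule (MvPolynomial (Fin n) k) (MvPolynomial (Fin n) k)) ≤ p := by
    rw [smul_eq_mul, Ideal.mul_top, Ideal.ofList, Ideal.span_le]
    rintro _ hx
    obtain ⟨i, -, rfl⟩ := List.mem_map.1 hx
    simpa using hXp i
  refine le_antisymm hle fun y hy ↦ ?_
  have hsub : y - C (coeff 0 y) ∈ p := hle <| by
    rw [mem_ofList_X_pow_smul_top_iff]
    intro s hs
    by_contra! h
    have hs0 : s = 0 := by
      ext i
      simpa using h i (List.mem_finRange i)
    subst hs0
    simp at hs
  have hc : coeff 0 y = 0 := by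
    by_contra h
    refine hp.ne_top (Ideal.eq_top_of_isUnit_mem p ?_ ((isUnit_iff_ne_zero.2 h).map C))
    simpa using p.sub_mem hy hsub
  rw [mem_ofList_X_pow_smul_top_iff]
  intro s hs
  by_contra! h
  have hs0 : s = 0 := by
    ext i
    simpa using h i (List.mem_finRange i)
  subst hs0
  exact mem_support_iff.1 hs hc

/-- A finitely generated module killed by a power of `(x₁, …, xₙ)` has a finite filtration with
quotients `A/(x₁, …, xₙ)`, each of projective dimension at most `n`. -/
lemma hasProjectiveDimensionLT_of_torsion {M : Type} [AddCommGroup M]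
    [Module (MvPolynomial (Fin n) k) M] [Module.Finite (MvPolynomial (Fin n) k) M] {t : ℕ}
    (hM : ∀ a ∈ (Ideal.span (Set.range (X : Fin n → MvPolynomial (Fin n) k))) ^ t,
      ∀ m : M, a • m = 0) :
    HasProjectiveDimensionLT (ModuleCat.of (MvPolynomial (Fin n) k) M) (n + 1) := by
  induction ‹Module.Finite (MvPolynomial (Fin n) k) M› using
    IsNoetherianRing.induction_on_isQuotientEquivQuotientPrime (MvPolynomial (Fin n) k) with
  | subsingleton N =>
    have := (ModuleCat.isZero_of_subsingleton
      (ModuleCat.of (MvPolynomial (Fin n) k) N)).hasProjectiveDimensionLT_zero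
    exact hasProjectiveDimensionLT_of_ge _ 0 _ (by omega)
  | quotient N p e =>
    have hp : p.1.IsPrime := p.2
    have hpow : (Ideal.span (Set.range (X : Fin n → MvPolynomial (Fin n) k))) ^ t ≤ p.1 := by
      intro a ha
      rw [← Ideal.Quotient.eq_zero_iff_mem]
      have h := congrArg e (hM a ha (e.symm 1))
      rw [map_smul, e.apply_symm_apply, map_zero] at h
      rw [← h, Algebra.smul_def, mul_one]
      rfl
    have hX : ∀ i, X i ∈ p.1 := fun i ↦
      Ideal.IsPrime.le_of_pow_le hpow (Ideal.subset_span ⟨i, rfl⟩)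
    have h := hasProjectiveDimensionLT_quotient (MvPolynomial (Fin n) k)
      (isWeaklyRegular_X_pow (k := k) (n := n) 1) (d := 0) inferInstance
    rw [List.length_map, List.length_finRange, zero_add] at h
    exact hasProjectiveDimensionLT_of_iso
      ((Submodule.quotEquivOfEq _ _ (prime_eq_ofList_X p.1 hX)) ≪≫ₗ e.symm).toModuleIso (n + 1)
  | exact N₁ N₂ N₃ f g hf hg hfg ih₁ ih₃ =>
    have h₁ := ih₁ fun a ha m ↦ hf (by rw [map_smul, hM a ha, map_zero])
    have h₃ := ih₃ fun a ha m ↦ by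
      obtain ⟨m, rfl⟩ := hg m
      rw [← map_smul, hM a ha, map_zero]
    let S : ShortComplex (ModuleCat (MvPolynomial (Fin n) k)) :=
      ShortComplex.mk (ModuleCat.ofHom f) (ModuleCat.ofHom g) (by
        ext m
        exact hfg.apply_apply_eq_zero m)
    have hS : S.ShortExact :=
      { exact := (ShortComplex.ShortExact.moduleCat_exact_iff_function_exact S).2 hfg
        mono_f := (ModuleCat.mono_iff_injective _).2 hf
        epi_g := (ModuleCat.epi_iff_surjective _).2 hg }
    exact hS.hasProjectiveDimensionLT_X₂ (n + 1) h₁ h₃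

end ProjectiveDimension

/-- Let `k` be a field, `A = k[x₁, …, xₙ]`, and `M` a finitely generated `A`-module
annihilated by a power of the ideal `(x₁, …, xₙ)`.  Then `Ext_A^i(M, A) = 0` for `i ≠ n`,
and `Ext_A^n(M, A)` is isomorphic, as an `A`-module, to the `k`-linear dual `Hom_k(M, k)`
(with `A` acting through its action on `M`). -/
theorem mvPolynomial_ext_duality_of_torsion (k : Type) [Field k] (n : ℕ)
    (M : Type) [AddCommGroup M] [Module (MvPolynomial (Fin n) k) M]
    [Module k M] [IsScalarTower k (MvPolynomial (Fin n) k) M]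
    [Module.Finite (MvPolynomial (Fin n) k) M]
    (htor : ∃ t : ℕ, ∀ a ∈ (Ideal.span
        (Set.range (MvPolynomial.X : Fin n → MvPolynomial (Fin n) k))) ^ t,
        ∀ m : M, a • m = 0) :
    (∀ i : ℕ, i ≠ n → Subsingleton (extA (MvPolynomial (Fin n) k) i M
        (MvPolynomial (Fin n) k))) ∧
      Nonempty (extA (MvPolynomial (Fin n) k) n M (MvPolynomial (Fin n) k)
        ≃ₗ[MvPolynomial (Fin n) k] (M →ₗ[k] k)) := by
  obtain ⟨t, ht⟩ := htor
  -- The exponent `t + 1` also covers `t = 0`, where the residue would need a negative degree.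
  let rs : List (MvPolynomial (Fin n) k) :=
    (List.finRange n).map fun i ↦ MvPolynomial.X i ^ (t + 1)
  have hlen : rs.length = n := by simp [rs]
  have hX : ∀ (i : Fin n) (m : M), (MvPolynomial.X i : MvPolynomial (Fin n) k) ^ (t + 1) • m = 0 :=
    fun i m ↦ ht _ (Ideal.pow_le_pow_right t.le_succ
      (Ideal.pow_mem_pow (Ideal.subset_span (Set.mem_range_self i)) _)) m
  have hN : ∀ r ∈ rs, ∀ m : ModuleCat.of (MvPolynomial (Fin n) k) M, r • m = 0 := by
    intro r hr m
    obtain ⟨i, -, rfl⟩ := List.mem_map.1 hr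
    exact hX i m
  have hrs := isWeaklyRegular_X_pow (k := k) (n := n) (t + 1)
  refine ⟨fun i hi ↦ ?_, ?_⟩
  · obtain ⟨e⟩ := nonempty_ext_equiv_abelianExt (ModuleCat.of (MvPolynomial (Fin n) k) M)
      (ModuleCat.of (MvPolynomial (Fin n) k) (MvPolynomial (Fin n) k)) i
    refine @Equiv.subsingleton _ _ e.toEquiv ?_
    rcases hi.lt_or_gt with hlt | hgt
    · exact subsingleton_ext_of_isWeaklyRegular hN _ hrs (hlen.symm ▸ hlt)
    · have := hasProjectiveDimensionLT_of_torsion ht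
      exact HasProjectiveDimensionLT.subsingleton _ (n + 1) i hgt _
  · obtain ⟨e₁⟩ := nonempty_ext_equiv_abelianExt (ModuleCat.of (MvPolynomial (Fin n) k) M)
      (ModuleCat.of (MvPolynomial (Fin n) k) (MvPolynomial (Fin n) k)) n
    obtain ⟨e₂⟩ := nonempty_ext_equiv_of_isWeaklyRegular hN _ hrs
    rw [hlen] at e₂
    have hq := fun y ↦ mem_ofList_X_pow_smul_top_iff (k := k) (t + 1) (List.finRange n) y
    simp only [List.mem_finRange, true_and] at hq
    exact ⟨e₁ ≪≫ₗ e₂ ≪≫ₗ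
      LinearEquiv.ofBijective (residueHom hq) (residueHom_bijective hq hX)⟩
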